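/- arXiv:1006.2296 — 2 statements merged into one kernel-verified Lean document; each statement's English description precedes it below -/
import Mathlib

section
/- Let α > 1 and L > 0. There exists a non-negative 1-periodic C^∞ function φ_{α,L} : ℝ → ℝ, belonging to the Gevrey class G^{α,L}([−1/2, 1/2]) (i.e. |φ_{α,L}|_{α,L} < ∞), whose support within [−1/2, 1/2] is contained in [−1/4, 1/4], and which satisfies φ_{α,L}(0) = 1 and φ_{α,L}'(0) = 0. -/
open scoped BigOperators ENNReal
open Real

noncomputable section

/-- Gevrey-(α, L) norm of a real function on a set `J ⊆ ℝ`, as an extended real: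
`|f|_{α,L} = Σ_{l ∈ ℕ} L^{lα} (l!)^{−α} sup_J |f^{(l)}|`. -/
noncomputable def gevreyNorm1 (α L : ℝ) (J : Set ℝ) (f : ℝ → ℝ) : ℝ≥0∞ :=
  ∑' l : ℕ,
    ENNReal.ofReal (L ^ (α * (l : ℝ)) / ((Nat.factorial l : ℝ) ^ α) *
      ⨆ x : J, |deriv^[l] f x.1|)

/-!
For odd `n`, the function `φ x = e · exp (-(cos 2πx)⁻ⁿ)`, extended by `0` where the cosine is
nonpositive, has Gevrey order `1 + 1/n`. Indeed, where `c = cos 2πx` is positive, `φ` extends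
holomorphically to the disc of radius `θ c` about `x`, and there it is bounded by
`e · exp (-c⁻ⁿ / 2)`. Cauchy's estimate bounds `|φ⁽ˡ⁾ x|` by `e · l! (θ c)⁻ˡ exp (-c⁻ⁿ / 2)`, and
maximizing over `c` costs only a factor `2ˡ (l!)^(1/n)`. By continuity the bound persists at the
boundary points `c = 0`, and elsewhere `φ` vanishes identically nearby. Any order strictly below
`α` makes the `(α, L)` norm finite for every `L`, so it suffices to take `n` with `1 + 1/n < α`.
-/

section

open Set Metric Filter Function
open scoped Nat Topology

/-- `f` is of Gevrey order `s` on `S`, uniformly: `|f⁽ˡ⁾| ≤ A Bˡ (l!)ˢ` on `S` for some constants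
`A` and `B`. The derivatives are those of `f` as a function on `ℝ`, not derivatives within `S`,
and have their junk values where `f` is not smooth. -/
def GevreyOn (s : ℝ) (S : Set ℝ) (f : ℝ → ℝ) : Prop :=
  ∃ A B : ℝ, 0 ≤ A ∧ 0 < B ∧ ∀ l : ℕ, ∀ x ∈ S, |iteratedDeriv l f x| ≤ A * B ^ l * (l ! : ℝ) ^ s

namespace GevreyOn

variable {s : ℝ} {S T : Set ℝ} {f : ℝ → ℝ}

lemma mono (hf : GevreyOn s T f) (hST : S ⊆ T) : GevreyOn s S f := by
  obtain ⟨A, B, hA, hB, hbound⟩ := hf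
  exact ⟨A, B, hA, hB, fun l x hx => hbound l x (hST hx)⟩

lemma const_mul (hf : GevreyOn s S f) (a : ℝ) : GevreyOn s S (fun x => a * f x) := by
  obtain ⟨A, B, hA, hB, hbound⟩ := hf
  refine ⟨|a| * A, B, by positivity, hB, fun l x hx => ?_⟩
  calc |iteratedDeriv l (fun x => a * f x) x|
      = |a| * |iteratedDeriv l f x| := by rw [iteratedDeriv_const_mul_field, abs_mul]
    _ ≤ |a| * (A * B ^ l * (l ! : ℝ) ^ s) := by gcongr; exact hbound l x hx
    _ = |a| * A * B ^ l * (l ! : ℝ) ^ s := by ring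

lemma closure (hf : GevreyOn s S f) (hsmooth : ContDiff ℝ (⊤ : ℕ∞) f) :
    GevreyOn s (closure S) f := by
  obtain ⟨A, B, hA, hB, hbound⟩ := hf
  have hcont (l : ℕ) : Continuous (iteratedDeriv l f) :=
    hsmooth.continuous_iteratedDeriv l (mod_cast le_top)
  exact ⟨A, B, hA, hB, fun l x hx =>
    le_on_closure (hbound l) (hcont l).abs.continuousOn continuousOn_const hx⟩

lemma univ_of_support_subset (hf : GevreyOn s S f) (hsmooth : ContDiff ℝ (⊤ : ℕ∞) f)
    (hsupp : support f ⊆ S) : GevreyOn s univ f := by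
  obtain ⟨A, B, hA, hB, hbound⟩ := hf.closure hsmooth
  refine ⟨A, B, hA, hB, fun l x _ => ?_⟩
  by_cases hx : x ∈ _root_.closure S
  · exact hbound l x hx
  · have hzero : f =ᶠ[𝓝 x] fun _ => 0 :=
      notMem_tsupport_iff_eventuallyEq.mp fun h => hx (closure_mono hsupp h)
    rw [hzero.iteratedDeriv_eq l, iteratedDeriv_fun_const_zero, abs_zero]
    positivity

end GevreyOn

lemma summable_pow_div_factorial_rpow {B ε : ℝ} (hB : 0 < B) (hε : 0 < ε) :
    Summable fun l : ℕ => B ^ l / (l ! : ℝ) ^ ε := by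
  have hpos (l : ℕ) : 0 < B ^ l / (l ! : ℝ) ^ ε := by positivity
  have hratio (l : ℕ) :
      B / ((l : ℝ) + 1) ^ ε = B ^ (l + 1) / ((l + 1)! : ℝ) ^ ε / (B ^ l / (l ! : ℝ) ^ ε) := by
    rw [Nat.factorial_succ, Nat.cast_mul, Nat.cast_succ, mul_rpow (by positivity) (by positivity)]
    field_simp
    ring
  have hlim : Tendsto (fun l : ℕ => B / ((l : ℝ) + 1) ^ ε) atTop (𝓝 0) :=
    ((tendsto_rpow_atTop hε).comp
      (tendsto_atTop_add_const_right _ 1 tendsto_natCast_atTop_atTop)).const_div_atTop B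
  refine summable_of_ratio_test_tendsto_lt_one one_pos
    (.of_forall fun l => (hpos l).ne') (hlim.congr fun l => ?_)
  rw [norm_of_nonneg (hpos _).le, norm_of_nonneg (hpos _).le, hratio]

lemma GevreyOn.gevreyNorm1_ne_top {s α L : ℝ} {J : Set ℝ} {f : ℝ → ℝ} (hf : GevreyOn s J f)
    (hs : s < α) (hL : 0 < L) : gevreyNorm1 α L J f ≠ ⊤ := by
  obtain ⟨A, B, hA, hB, hbound⟩ := hf
  have hsum : Summable fun l : ℕ => A * ((L ^ α * B) ^ l / (l ! : ℝ) ^ (α - s)) :=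
    (summable_pow_div_factorial_rpow (by positivity) (sub_pos.mpr hs)).mul_left A
  refine ne_top_of_le_ne_top hsum.tsum_ofReal_ne_top
    (ENNReal.tsum_le_tsum fun l => ENNReal.ofReal_le_ofReal ?_)
  have hsup : ⨆ x : J, |deriv^[l] f x.1| ≤ A * B ^ l * (l ! : ℝ) ^ s :=
    Real.iSup_le (fun x => by rw [← iteratedDeriv_eq_iterate]; exact hbound l x x.2) (by positivity)
  calc L ^ (α * (l : ℝ)) / (l ! : ℝ) ^ α * ⨆ x : J, |deriv^[l] f x.1|
      ≤ L ^ (α * (l : ℝ)) / (l ! : ℝ) ^ α * (A * B ^ l * (l ! : ℝ) ^ s) := by gcongr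
    _ = A * ((L ^ α * B) ^ l / (l ! : ℝ) ^ (α - s)) := by
      rw [rpow_sub (by positivity), rpow_mul hL.le, rpow_natCast, mul_pow]
      field_simp

lemma iteratedDeriv_re_eventuallyEq {F : ℂ → ℂ} {x : ℝ} (hF : AnalyticAt ℂ F x) (l : ℕ) :
    iteratedDeriv l (fun y : ℝ => (F y).re) =ᶠ[𝓝 x] fun y => (iteratedDeriv l F y).re := by
  induction l with
  | zero => simp only [iteratedDeriv_zero, EventuallyEq.rfl]
  | succ l ih =>
    have hanalytic : ∀ᶠ y : ℝ in 𝓝 x, AnalyticAt ℂ F y :=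
      Complex.continuous_ofReal.continuousAt.eventually hF.eventually_analyticAt
    filter_upwards [ih.eventuallyEq_nhds, hanalytic] with y hy hFy
    have hderiv : HasDerivAt (iteratedDeriv l F) (iteratedDeriv (l + 1) F y) y := by
      rw [iteratedDeriv_succ, iteratedDeriv_eq_iterate]
      exact (hFy.iterated_deriv l).differentiableAt.hasDerivAt
    rw [iteratedDeriv_succ, hy.deriv_eq, hderiv.real_of_complex.deriv]

lemma abs_iteratedDeriv_le_of_eventuallyEq_re {f : ℝ → ℝ} {F : ℂ → ℂ} {x R M : ℝ} (hR : 0 < R)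
    (hF : DiffContOnCl ℂ F (ball x R)) (hM : ∀ z ∈ sphere (x : ℂ) R, ‖F z‖ ≤ M)
    (hfF : f =ᶠ[𝓝 x] fun y => (F y).re) (l : ℕ) : |iteratedDeriv l f x| ≤ l ! * M / R ^ l := by
  have hanalytic : AnalyticAt ℂ F x :=
    hF.differentiableOn.analyticAt (ball_mem_nhds _ hR)
  rw [hfF.iteratedDeriv_eq l, (iteratedDeriv_re_eventuallyEq hanalytic l).eq_of_nhds]
  exact (Complex.abs_re_le_norm _).trans
    (Complex.norm_iteratedDeriv_le_of_forall_mem_sphere_norm_le l hR hF hM)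

lemma pow_mul_exp_neg_pow_le {n : ℕ} (hn : n ≠ 0) (l : ℕ) {t : ℝ} (ht : 0 ≤ t) :
    t ^ l * exp (-(t ^ n / 2)) ≤ 2 ^ l * (l ! : ℝ) ^ (1 / n : ℝ) := by
  have hexp : exp (-(t ^ n / 2)) ^ n ≤ exp (-(t ^ n / 2)) :=
    pow_le_of_le_one (exp_pos _).le (exp_le_one_iff.mpr (neg_nonpos.mpr (by positivity))) hn
  have htaylor : (t ^ n / 2) ^ l ≤ l ! * exp (t ^ n / 2) := by
    rw [← div_le_iff₀' (by positivity)]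
    exact pow_div_factorial_le_exp _ (by positivity) l
  refine le_of_pow_le_pow_left₀ hn (by positivity) ?_
  calc (t ^ l * exp (-(t ^ n / 2))) ^ n
      = 2 ^ l * (t ^ n / 2) ^ l * exp (-(t ^ n / 2)) ^ n := by
        rw [← mul_pow 2, mul_div_cancel₀ _ two_ne_zero, mul_pow, pow_right_comm]
    _ ≤ 2 ^ l * (l ! * exp (t ^ n / 2)) * exp (-(t ^ n / 2)) := by gcongr
    _ = 2 ^ l * l ! := by rw [exp_neg]; field_simp
    _ ≤ (2 ^ l) ^ n * l ! := by
      gcongr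
      exact le_self_pow₀ (one_le_pow₀ one_le_two) hn
    _ = (2 ^ l * (l ! : ℝ) ^ (1 / n : ℝ)) ^ n := by
      rw [mul_pow, one_div, rpow_inv_natCast_pow (by positivity) hn]

lemma exists_forall_half_inv_pow_le_re_inv_pow (n : ℕ) :
    ∃ δ > 0, ∀ c : ℝ, 0 < c → ∀ w : ℂ, ‖w - c‖ ≤ δ * c → c⁻¹ ^ n / 2 ≤ (w⁻¹ ^ n).re := by
  have hcont : ContinuousAt (fun u : ℂ => (u⁻¹ ^ n).re) 1 :=
    Complex.continuous_re.continuousAt.comp ((continuousAt_inv₀ one_ne_zero).pow n)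
  have hnear : ∀ᶠ u : ℂ in 𝓝 1, 1 / 2 < (u⁻¹ ^ n).re :=
    hcont.eventually (lt_mem_nhds (by norm_num))
  obtain ⟨δ, hδ, hball⟩ := nhds_basis_closedBall.eventually_iff.mp hnear
  refine ⟨δ, hδ, fun c hc w hw => ?_⟩
  have hc' : (c : ℂ) ≠ 0 := mod_cast hc.ne'
  have hdist : w / c ∈ closedBall (1 : ℂ) δ := by
    rw [mem_closedBall_iff_norm, div_sub_one hc', norm_div, Complex.norm_of_nonneg hc.le]
    exact (div_le_iff₀ hc).mpr hw
  have hscale : w⁻¹ ^ n = (c⁻¹ ^ n : ℝ) * (w / c)⁻¹ ^ n := by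
    push_cast
    rw [← mul_pow, inv_div, div_eq_mul_inv, inv_mul_cancel_left₀ hc']
  rw [hscale, Complex.re_ofReal_mul, div_eq_mul_one_div]
  gcongr
  exact (hball hdist).le

lemma expNegInvGlue_pow_eventuallyEq_re_cexp (n : ℕ) {g : ℝ → ℝ} {G : ℂ → ℂ} (hG : Continuous G)
    (hgG : ∀ y : ℝ, G y = g y) {x : ℝ} (hx : 0 < g x) :
    (fun y => expNegInvGlue (g y ^ n)) =ᶠ[𝓝 x]
      fun y : ℝ => (Complex.exp (-(G y)⁻¹ ^ n)).re := by
  have hg : Continuous g := by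
    have hre : Continuous fun y : ℝ => (G y).re := by fun_prop
    simpa only [hgG, Complex.ofReal_re] using hre
  filter_upwards [hg.continuousAt.eventually_const_lt hx] with y hy
  have hexp : Complex.exp (-(G y)⁻¹ ^ n) = (exp (-(g y)⁻¹ ^ n) : ℝ) := by
    push_cast
    rw [← hgG]
  rw [hexp, Complex.ofReal_re, expNegInvGlue, if_neg (pow_pos hy n).not_ge, inv_pow]

lemma abs_iteratedDeriv_expNegInvGlue_pow_le {n : ℕ} (hn : n ≠ 0) {g : ℝ → ℝ} {G : ℂ → ℂ}
    (hG : Differentiable ℂ G) (hgG : ∀ y : ℝ, G y = g y) {x θ : ℝ} (hx : 0 < g x) (hθ : 0 < θ)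
    (hre : ∀ z ∈ closedBall (x : ℂ) (θ * g x), (g x)⁻¹ ^ n / 2 ≤ ((G z)⁻¹ ^ n).re) (l : ℕ) :
    |iteratedDeriv l (fun y => expNegInvGlue (g y ^ n)) x| ≤
      (2 / θ) ^ l * (l ! : ℝ) ^ (1 + 1 / n : ℝ) := by
  set R := θ * g x
  have hR : 0 < R := by positivity
  set F : ℂ → ℂ := fun z => Complex.exp (-(G z)⁻¹ ^ n)
  have hG_ne (z : ℂ) (hz : z ∈ closedBall (x : ℂ) R) : G z ≠ 0 := by
    intro hGz
    have hpos : 0 < (g x)⁻¹ ^ n / 2 := by positivity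
    have hle := hre z hz
    rw [hGz, inv_zero, zero_pow hn, Complex.zero_re] at hle
    exact hpos.not_ge hle
  have hF : DiffContOnCl ℂ F (ball x R) := by
    refine DifferentiableOn.diffContOnCl fun z hz => ?_
    rw [closure_ball _ hR.ne'] at hz
    exact (((hG z).inv (hG_ne z hz)).pow n).neg.cexp.differentiableWithinAt
  have hF_norm (z : ℂ) (hz : z ∈ sphere (x : ℂ) R) : ‖F z‖ ≤ exp (-((g x)⁻¹ ^ n / 2)) := by
    rw [Complex.norm_exp, Complex.neg_re, exp_le_exp, neg_le_neg_iff]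
    exact hre z (sphere_subset_closedBall hz)
  have hF_re : (fun y => expNegInvGlue (g y ^ n)) =ᶠ[𝓝 x] fun y : ℝ => (F y).re :=
    expNegInvGlue_pow_eventuallyEq_re_cexp n hG.continuous hgG hx
  calc |iteratedDeriv l (fun y => expNegInvGlue (g y ^ n)) x|
      ≤ l ! * exp (-((g x)⁻¹ ^ n / 2)) / R ^ l :=
        abs_iteratedDeriv_le_of_eventuallyEq_re hR hF hF_norm hF_re l
    _ = l ! / θ ^ l * ((g x)⁻¹ ^ l * exp (-((g x)⁻¹ ^ n / 2))) := by
      rw [mul_pow, inv_pow, div_mul_eq_div_div, div_eq_mul_inv _ (g x ^ l)]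
      ring
    _ ≤ l ! / θ ^ l * (2 ^ l * (l ! : ℝ) ^ (1 / n : ℝ)) := by
      refine mul_le_mul_of_nonneg_left ?_ (by positivity)
      exact pow_mul_exp_neg_pow_le hn l (inv_nonneg.mpr hx.le)
    _ = (2 / θ) ^ l * (l ! : ℝ) ^ (1 + 1 / n : ℝ) := by
      rw [rpow_add (by positivity), rpow_one, div_pow]
      ring

theorem gevreyOn_expNegInvGlue_pow {n : ℕ} (hn : n ≠ 0) {g : ℝ → ℝ} {G : ℂ → ℂ}
    (hG : Differentiable ℂ G) (hgG : ∀ x : ℝ, G x = g x) {K : ℝ} (hK : 0 < K)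
    (hlip : ∀ (x : ℝ) (z : ℂ), ‖z - x‖ ≤ g x → ‖G z - G x‖ ≤ K * ‖z - x‖) :
    GevreyOn (1 + 1 / n) {x | 0 < g x} (fun x => expNegInvGlue (g x ^ n)) := by
  obtain ⟨δ, hδ, hre⟩ := exists_forall_half_inv_pow_le_re_inv_pow n
  set θ := min 1 (δ / K)
  have hθ : 0 < θ := by positivity
  refine ⟨1, 2 / θ, zero_le_one, by positivity, fun l x (hx : 0 < g x) => ?_⟩
  rw [one_mul]
  refine abs_iteratedDeriv_expNegInvGlue_pow_le hn hG hgG hx hθ (fun z hz => hre _ hx _ ?_) l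
  rw [mem_closedBall_iff_norm] at hz
  have hz_le : ‖z - x‖ ≤ g x := hz.trans (mul_le_of_le_one_left hx.le (min_le_left _ _))
  calc ‖G z - g x‖
      ≤ K * ‖z - x‖ := hgG x ▸ hlip x z hz_le
    _ ≤ K * (δ / K * g x) := by
      gcongr
      exact hz.trans (by gcongr; exact min_le_right _ _)
    _ = δ * g x := by field_simp

lemma norm_cos_sub_cos_ofReal_le (w : ℂ) (a : ℝ) :
    ‖Complex.cos w - Complex.cos a‖ ≤ ‖w - a‖ * exp ‖w - a‖ := by
  obtain ⟨h, rfl⟩ : ∃ h, w = a + h := ⟨w - a, by ring⟩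
  rw [add_sub_cancel_left]
  have hexp (v : ℂ) : ‖Complex.exp v - 1‖ ≤ ‖v‖ * exp ‖v‖ := by
    simpa using Complex.norm_exp_sub_sum_le_norm_mul_exp v 1
  have hcos : Complex.cos (a + h) - Complex.cos a =
      (Complex.exp (a * Complex.I) * (Complex.exp (h * Complex.I) - 1) +
        Complex.exp ((-a : ℝ) * Complex.I) * (Complex.exp (-h * Complex.I) - 1)) / 2 := by
    simp only [Complex.cos, mul_sub, ← Complex.exp_add]
    push_cast
    ring_nf
  have hh : ‖h * Complex.I‖ = ‖h‖ := by simp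
  have hh' : ‖-h * Complex.I‖ = ‖h‖ := by simp
  calc ‖Complex.cos (a + h) - Complex.cos a‖
      ≤ (‖Complex.exp (h * Complex.I) - 1‖ + ‖Complex.exp (-h * Complex.I) - 1‖) / 2 := by
        rw [hcos, norm_div, Complex.norm_two]
        gcongr
        refine (norm_add_le _ _).trans_eq ?_
        rw [norm_mul, norm_mul, Complex.norm_exp_ofReal_mul_I, Complex.norm_exp_ofReal_mul_I,
          one_mul, one_mul]
    _ ≤ (‖h‖ * exp ‖h‖ + ‖h‖ * exp ‖h‖) / 2 := by
      gcongr
      · exact hh ▸ hexp (h * Complex.I)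
      · exact hh' ▸ hexp (-h * Complex.I)
    _ = ‖h‖ * exp ‖h‖ := by ring

lemma deriv_zero_of_even {E : Type*} [NormedAddCommGroup E] [NormedSpace ℝ E] {f : ℝ → E}
    (hf : Function.Even f) : deriv f 0 = 0 := by
  have hneg : deriv f 0 = -deriv f 0 := by
    simpa only [hf _, neg_zero] using deriv_comp_neg f 0
  have : IsAddTorsionFree E := .of_isTorsionFree ℝ E
  exact self_eq_neg.mp hneg

/-- The bump `e · exp (-(cos 2πx)⁻ⁿ)`, extended by `0` where `(cos 2πx)ⁿ ≤ 0`; the factor `e`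
normalizes its value at `0` to `1`. For odd `n` it vanishes where the cosine is nonpositive. -/
def gevreyBump (n : ℕ) (x : ℝ) : ℝ := exp 1 * expNegInvGlue (cos (2 * π * x) ^ n)

namespace gevreyBump

variable (n : ℕ)

lemma contDiff : ContDiff ℝ (⊤ : ℕ∞) (gevreyBump n) := by
  have hcos : ContDiff ℝ (⊤ : ℕ∞) fun x : ℝ => cos (2 * π * x) ^ n := by fun_prop
  exact contDiff_const.mul (expNegInvGlue.contDiff.comp hcos)

lemma nonneg (x : ℝ) : 0 ≤ gevreyBump n x :=
  mul_nonneg (exp_pos 1).le (expNegInvGlue.nonneg _)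

lemma periodic : Periodic (gevreyBump n) 1 := fun x => by
  rw [gevreyBump, gevreyBump, mul_add, mul_one, cos_add_two_pi]

lemma even : Function.Even (gevreyBump n) := fun x => by
  rw [gevreyBump, gevreyBump, mul_neg, cos_neg]

lemma apply_zero : gevreyBump n 0 = 1 := by
  simp [gevreyBump, expNegInvGlue, ← exp_add]

lemma deriv_zero : deriv (gevreyBump n) 0 = 0 :=
  deriv_zero_of_even (even n)

variable {n}

lemma eq_zero_of_cos_nonpos (hn : Odd n) {x : ℝ} (hx : cos (2 * π * x) ≤ 0) :
    gevreyBump n x = 0 := by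
  rw [gevreyBump, expNegInvGlue.zero_of_nonpos (hn.pow_nonpos hx), mul_zero]

lemma eq_zero_of_quarter_le_abs (hn : Odd n) {x : ℝ} (hx : 1 / 4 ≤ |x|) (hx' : |x| ≤ 1 / 2) :
    gevreyBump n x = 0 := by
  refine eq_zero_of_cos_nonpos hn ?_
  rw [← cos_abs, abs_mul, abs_of_pos two_pi_pos]
  exact cos_nonpos_of_pi_div_two_le_of_le (by nlinarith [pi_pos]) (by nlinarith [pi_pos])

lemma gevreyOn_univ (hn : Odd n) : GevreyOn (1 + 1 / n) univ (gevreyBump n) := by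
  have hdiff : Differentiable ℂ fun z : ℂ => Complex.cos (2 * π * z) := by fun_prop
  have hlip (x : ℝ) (z : ℂ) (hz : ‖z - x‖ ≤ cos (2 * π * x)) :
      ‖Complex.cos (2 * π * z) - Complex.cos (2 * π * x)‖ ≤
        2 * π * exp (2 * π) * ‖z - x‖ := by
    have hnorm : ‖2 * π * z - 2 * π * x‖ = 2 * π * ‖z - x‖ := by
      rw [← mul_sub, norm_mul, norm_mul, Complex.norm_two, Complex.norm_of_nonneg pi_pos.le]
    calc ‖Complex.cos (2 * π * z) - Complex.cos (2 * π * x)‖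
        ≤ 2 * π * ‖z - x‖ * exp (2 * π * ‖z - x‖) := by
          simpa only [hnorm, Complex.ofReal_mul, Complex.ofReal_ofNat] using
            norm_cos_sub_cos_ofReal_le (2 * π * z) (2 * π * x)
      _ ≤ 2 * π * ‖z - x‖ * exp (2 * π * 1) := by
        gcongr
        exact hz.trans (cos_le_one _)
      _ = 2 * π * exp (2 * π) * ‖z - x‖ := by ring_nf
  have hpos : GevreyOn (1 + 1 / n) {x | 0 < cos (2 * π * x)} (gevreyBump n) :=
    (gevreyOn_expNegInvGlue_pow hn.pos.ne' hdiff (fun x => by push_cast; rfl)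
      (by positivity) hlip).const_mul (exp 1)
  exact hpos.univ_of_support_subset (contDiff n) fun x hx =>
    not_le.mp (mt (eq_zero_of_cos_nonpos hn) hx)

end gevreyBump

lemma exists_odd_one_div_lt {ε : ℝ} (hε : 0 < ε) : ∃ n : ℕ, Odd n ∧ 1 / (n : ℝ) < ε := by
  obtain ⟨m, hm⟩ := exists_nat_one_div_lt hε
  refine ⟨2 * m + 1, odd_two_mul_add_one m, lt_of_le_of_lt ?_ hm⟩
  gcongr
  push_cast
  linarith [m.cast_nonneg (α := ℝ)]

end

/-- Existence of Gevrey bump functions: for `α > 1` and `L > 0` there is a non-negative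
`1`-periodic `C^∞` function `φ` of class `G^{α,L}([−1/2,1/2])`, whose support within
`[−1/2,1/2]` is contained in `[−1/4,1/4]`, with `φ(0) = 1` and `φ'(0) = 0`. -/
theorem gevrey_bump_exists (α L : ℝ) (hα : 1 < α) (hL : 0 < L) :
    ∃ φ : ℝ → ℝ,
      ContDiff ℝ (⊤ : ℕ∞) φ ∧
      (∀ x : ℝ, 0 ≤ φ x) ∧
      Function.Periodic φ 1 ∧
      gevreyNorm1 α L (Set.Icc (-(1/2)) (1/2)) φ ≠ ⊤ ∧
      (∀ x ∈ Set.Icc (-(1/2) : ℝ) (1/2), x ∉ Set.Icc (-(1/4) : ℝ) (1/4) → φ x = 0) ∧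
      φ 0 = 1 ∧ deriv φ 0 = 0 := by
  obtain ⟨n, hn, hnα⟩ := exists_odd_one_div_lt (sub_pos.mpr hα)
  refine ⟨gevreyBump n, gevreyBump.contDiff n, gevreyBump.nonneg n, gevreyBump.periodic n,
    ?_, fun x hx hx' => ?_, gevreyBump.apply_zero n, gevreyBump.deriv_zero n⟩
  · have hgevrey := (gevreyBump.gevreyOn_univ hn).mono (Set.subset_univ (Set.Icc (-(1/2)) (1/2)))
    exact hgevrey.gevreyNorm1_ne_top (lt_sub_iff_add_lt'.mp hnα) hL
  · rw [Set.mem_Icc, ← abs_le] at hx hx'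
    exact gevreyBump.eq_zero_of_quarter_le_abs hn (not_le.mp hx').le hx
end
end

section
/- Let α ≥ 1, Λ₁ > 0, L₁ > 0, and let I, J be compact intervals of ℝ. Let f ∈ G^{α,Λ₁}(I) and g ∈ G^{α,L₁}(J) with g(J) ⊆ I. If |g|_{α,L₁} ≤ Λ₁^α, then f ∘ g ∈ G^{α,L₁}(J) and |f ∘ g|_{α,L₁} ≤ |f|_{α,Λ₁}. -/
open scoped BigOperators ENNReal
open Real

noncomputable section

/-!
By the Faà di Bruno formula `(f ∘ g)⁽ⁿ⁾ = ∑ₖ (f⁽ᵏ⁾ ∘ g) Bₙ,ₖ(g⁽¹⁾, g⁽²⁾, …)`, where the partial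
Bell polynomial `Bₙ,ₖ` is `n! / k!` times the `n`-th coefficient of `(∑_{i ≥ 1} g⁽ⁱ⁾ Xⁱ / i!) ^ k`.
Let `P` be the power series whose coefficients are the terms of `|g|_{α,L₁}`. Since
`k! * ∏ lᵢ! ≤ (∑ lᵢ)!` for `k` positive integers `lᵢ`, and `α - 1 ≥ 0`, the `n`-th term of
`|f ∘ g|_{α,L₁}` is at most the `n`-th coefficient of `∑ₖ (k!)^{-α} sup |f⁽ᵏ⁾| Pᵏ`. The
coefficients of `Pᵏ` sum to `|g|_{α,L₁}ᵏ ≤ (Λ₁ ^ α) ^ k`, which leaves the series of `|f|_{α,Λ₁}`.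
-/

namespace Gevrey

open Finset PowerSeries
open scoped Nat ContDiff

section PartialBell

variable {𝕜 : Type*} [Field 𝕜]

/-- The exponential generating series `∑_{i ≥ 1} aᵢ Xⁱ / i!`. The term `a 0` is discarded, so that
for `a i = g⁽ⁱ⁾(x)` this is the Taylor series of `t ↦ g (x + t) - g x`. -/
def expGenSeries (a : ℕ → 𝕜) : 𝕜⟦X⟧ :=
  .mk fun i => if i = 0 then 0 else a i / i !

/-- The partial exponential Bell polynomial `Bₙ,ₖ(a₁, a₂, …)`, encoded through its generating
series. -/
def partialBell (a : ℕ → 𝕜) (n k : ℕ) : 𝕜 :=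
  n ! / k ! * coeff n (expGenSeries a ^ k)

lemma constantCoeff_expGenSeries (a : ℕ → 𝕜) : constantCoeff (expGenSeries a) = 0 := by
  simp [expGenSeries, ← coeff_zero_eq_constantCoeff_apply]

lemma coeff_succ_expGenSeries (a : ℕ → 𝕜) (i : ℕ) :
    coeff (i + 1) (expGenSeries a) = a (i + 1) / (i + 1)! := by
  simp [expGenSeries]

lemma partialBell_eq_zero_of_lt (a : ℕ → 𝕜) {n k : ℕ} (h : n < k) :
    partialBell a n k = 0 := by
  have hX : (X : 𝕜⟦X⟧) ^ k ∣ expGenSeries a ^ k :=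
    pow_dvd_pow_of_dvd (X_dvd_iff.2 (constantCoeff_expGenSeries a)) k
  rw [partialBell, X_pow_dvd_iff.1 hX n h, mul_zero]

lemma partialBell_zero_zero (a : ℕ → 𝕜) : partialBell a 0 0 = 1 := by
  simp [partialBell]

lemma partialBell_succ_zero (a : ℕ → 𝕜) (n : ℕ) : partialBell a (n + 1) 0 = 0 := by
  simp [partialBell, coeff_one]

lemma partialBell_succ_succ [CharZero 𝕜] (a : ℕ → 𝕜) (n k : ℕ) :
    partialBell a (n + 1) (k + 1) =
      ∑ i ∈ range (n + 1), n.choose i * partialBell a i k * a (n - i + 1) := by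
  have hderiv := congrArg (coeff n) (Derivation.leibniz_pow (d⁄dX 𝕜) (expGenSeries a) (k + 1))
  rw [coeff_derivative, Nat.add_sub_cancel, map_nsmul, smul_eq_mul, coeff_mul,
    Nat.sum_antidiagonal_eq_sum_range_succ_mk] at hderiv
  calc partialBell a (n + 1) (k + 1)
      = n ! / (k + 1)! * (coeff (n + 1) (expGenSeries a ^ (k + 1)) * (n + 1)) := by
        rw [partialBell, Nat.factorial_succ n]
        push_cast
        ring
    _ = _ := by
        rw [hderiv, nsmul_eq_mul, mul_sum, mul_sum]
        refine sum_congr rfl fun i hi => ?_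
        rw [coeff_derivative, coeff_succ_expGenSeries, partialBell,
          Nat.cast_choose 𝕜 (mem_range_succ_iff.1 hi), Nat.factorial_succ k,
          Nat.factorial_succ (n - i)]
        have hk : (k : 𝕜) + 1 ≠ 0 := Nat.cast_add_one_ne_zero k
        have hni : ((n - i : ℕ) : 𝕜) + 1 ≠ 0 := Nat.cast_add_one_ne_zero (n - i)
        have hfact (m : ℕ) : (m ! : 𝕜) ≠ 0 := Nat.cast_ne_zero.2 m.factorial_ne_zero
        have := hfact k
        have := hfact i
        have := hfact (n - i)
        push_cast
        field_simp

end PartialBell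

section FaaDiBruno

variable {𝕜 : Type*} [NontriviallyNormedField 𝕜] {n : ℕ} {f g : 𝕜 → 𝕜}

lemma iteratedDeriv_succ_comp (hf : ContDiff 𝕜 (n + 1) f) (hg : ContDiff 𝕜 (n + 1) g) (x : 𝕜) :
    iteratedDeriv (n + 1) (f ∘ g) x =
      ∑ i ∈ range (n + 1),
        n.choose i * iteratedDeriv i (deriv f ∘ g) x * iteratedDeriv (n - i + 1) g x := by
  obtain ⟨hf_diff, -, hf'⟩ := contDiff_succ_iff_deriv.1 hf
  obtain ⟨hg_diff, -, hg'⟩ := contDiff_succ_iff_deriv.1 hg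
  have hchain : deriv (f ∘ g) = (deriv f ∘ g) * deriv g :=
    funext fun y => deriv_comp y (hf_diff _) (hg_diff _)
  rw [iteratedDeriv_succ', hchain,
    iteratedDeriv_mul (hf'.comp (hg.of_le le_self_add)).contDiffAt hg'.contDiffAt]
  simp only [iteratedDeriv_succ']

theorem iteratedDeriv_comp_eq_sum_partialBell [CharZero 𝕜] (hf : ContDiff 𝕜 n f)
    (hg : ContDiff 𝕜 n g) (x : 𝕜) :
    iteratedDeriv n (f ∘ g) x =
      ∑ k ∈ range (n + 1),
        iteratedDeriv k f (g x) * partialBell (fun i => iteratedDeriv i g x) n k := by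
  induction n using Nat.strong_induction_on generalizing f with
  | _ n ih =>
  rcases n with _ | n
  · simp [partialBell_zero_zero]
  rw [Nat.cast_succ] at hf hg
  have hf' : ContDiff 𝕜 n (deriv f) := (contDiff_succ_iff_deriv.1 hf).2.2
  set a : ℕ → 𝕜 := fun i => iteratedDeriv i g x
  have hih : ∀ i ∈ range (n + 1), iteratedDeriv i (deriv f ∘ g) x =
      ∑ k ∈ range (n + 1), iteratedDeriv (k + 1) f (g x) * partialBell a i k := by
    intro i hi
    have hin : (i : ℕ∞ω) ≤ n := mod_cast mem_range_succ_iff.1 hi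
    rw [ih i (mem_range.1 hi) (hf'.of_le hin) (hg.of_le (hin.trans le_self_add))]
    simp only [iteratedDeriv_succ']
    refine sum_subset (range_mono (mem_range.1 hi)) fun k _ hk => ?_
    rw [partialBell_eq_zero_of_lt a (by simpa using hk), mul_zero]
  calc iteratedDeriv (n + 1) (f ∘ g) x
      = ∑ i ∈ range (n + 1), n.choose i * iteratedDeriv i (deriv f ∘ g) x * a (n - i + 1) :=
        iteratedDeriv_succ_comp hf hg x
    _ = ∑ i ∈ range (n + 1), ∑ k ∈ range (n + 1),
          iteratedDeriv (k + 1) f (g x) * (n.choose i * partialBell a i k * a (n - i + 1)) := by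
        refine sum_congr rfl fun i hi => ?_
        rw [hih i hi, mul_sum, sum_mul]
        exact sum_congr rfl fun k _ => by ring
    _ = ∑ k ∈ range (n + 1), iteratedDeriv (k + 1) f (g x) * partialBell a (n + 1) (k + 1) := by
        rw [sum_comm]
        simp only [partialBell_succ_succ, mul_sum]
    _ = _ := by rw [sum_range_succ' _ (n + 1), partialBell_succ_zero, mul_zero, add_zero]

end FaaDiBruno

section Weights

lemma factorial_card_mul_prod_factorial_le {ι : Type*} (s : Finset ι) (l : ι → ℕ)
    (hl : ∀ i ∈ s, l i ≠ 0) : (#s)! * ∏ i ∈ s, (l i)! ≤ (∑ i ∈ s, l i)! := by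
  induction s using Finset.cons_induction with
  | empty => simp
  | cons j s hj ih =>
    obtain ⟨hlj, hls⟩ := (forall_mem_cons hj _).1 hl
    set N := ∑ i ∈ s, l i
    have hcard : #s ≤ N := by
      simpa using card_nsmul_le_sum s l 1 fun i hi => Nat.one_le_iff_ne_zero.2 (hls i hi)
    have hchoose : #s + 1 ≤ (l j + N).choose N :=
      calc #s + 1 ≤ (N + 1).choose N := by simpa using hcard
        _ ≤ (l j + N).choose N := Nat.choose_le_choose _ (by omega)
    rw [card_cons, prod_cons, sum_cons]
    calc (#s + 1)! * ((l j)! * ∏ i ∈ s, (l i)!)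
        = (#s + 1) * (l j)! * ((#s)! * ∏ i ∈ s, (l i)!) := by rw [Nat.factorial_succ]; ring
      _ ≤ (l j + N).choose N * (l j)! * N ! := by gcongr; exact ih hls
      _ = (l j + N)! := Nat.add_choose_mul_factorial_mul_factorial _ _

lemma factorial_card_rpow_mul_weight_sum_le {ι : Type*} {r s : ℝ} (hr : 0 ≤ r) (hs : 0 ≤ s)
    (t : Finset ι) (l : ι → ℕ) (hl : ∀ i ∈ t, l i ≠ 0) :
    ((#t)! : ℝ) ^ s * (r ^ (∑ i ∈ t, l i) / ((∑ i ∈ t, l i)! : ℝ) ^ s) ≤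
      ∏ i ∈ t, r ^ l i / ((l i)! : ℝ) ^ s := by
  have hfact : ((#t)! : ℝ) ^ s * ∏ i ∈ t, ((l i)! : ℝ) ^ s ≤ ((∑ i ∈ t, l i)! : ℝ) ^ s := by
    rw [Real.finsetProd_rpow _ _ fun i _ => by positivity,
      ← Real.mul_rpow (by positivity) (by positivity)]
    gcongr
    exact_mod_cast factorial_card_mul_prod_factorial_le t l hl
  rw [prod_div_distrib, prod_pow_eq_pow_sum, ← mul_div_assoc,
    div_le_div_iff₀ (by positivity) (by positivity), mul_right_comm, mul_comm]
  gcongr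

lemma factorial_rpow_mul_norm_coeff_pow_le {R : Type*} [NormedCommRing R] [NormOneClass R]
    {r s : ℝ} (hr : 0 ≤ r) (hs : 0 ≤ s) {P : R⟦X⟧} {Q : ℝ⟦X⟧} (hP : constantCoeff P = 0)
    (hPQ : ∀ i, r ^ i / (i ! : ℝ) ^ s * ‖coeff i P‖ ≤ coeff i Q) (n k : ℕ) :
    (k ! : ℝ) ^ s * (r ^ n / (n ! : ℝ) ^ s) * ‖coeff n (P ^ k)‖ ≤ coeff n (Q ^ k) := by
  have hweight (i : ℕ) : 0 ≤ r ^ i / (i ! : ℝ) ^ s := by positivity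
  have hQ (i : ℕ) : 0 ≤ coeff i Q := (mul_nonneg (hweight i) (norm_nonneg _)).trans (hPQ i)
  have hterm : ∀ l ∈ finsuppAntidiag (range k) n,
      (k ! : ℝ) ^ s * (r ^ n / (n ! : ℝ) ^ s) * ∏ i ∈ range k, ‖coeff (l i) P‖ ≤
        ∏ i ∈ range k, coeff (l i) Q := by
    intro l hl
    by_cases hpos : ∀ i ∈ range k, l i ≠ 0
    · have hweights := factorial_card_rpow_mul_weight_sum_le hr hs (range k) l hpos
      rw [card_range, (mem_finsuppAntidiag.1 hl).1] at hweights
      calc _ ≤ (∏ i ∈ range k, r ^ l i / ((l i)! : ℝ) ^ s) * ∏ i ∈ range k, ‖coeff (l i) P‖ := by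
            gcongr
        _ = ∏ i ∈ range k, r ^ l i / ((l i)! : ℝ) ^ s * ‖coeff (l i) P‖ := prod_mul_distrib.symm
        _ ≤ ∏ i ∈ range k, coeff (l i) Q :=
            prod_le_prod (fun i _ => mul_nonneg (hweight _) (norm_nonneg _)) fun i _ => hPQ _
    · push Not at hpos
      obtain ⟨i, hi, hli⟩ := hpos
      rw [prod_eq_zero hi (by simp [hli, hP]), mul_zero]
      exact prod_nonneg fun i _ => hQ _
  rw [coeff_pow, coeff_pow]
  calc _ ≤ (k ! : ℝ) ^ s * (r ^ n / (n ! : ℝ) ^ s) *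
          ∑ l ∈ finsuppAntidiag (range k) n, ∏ i ∈ range k, ‖coeff (l i) P‖ := by
        gcongr
        exact (norm_sum_le _ _).trans (sum_le_sum fun l _ => Finset.norm_prod_le _ _)
    _ ≤ _ := by
        rw [mul_sum]
        exact sum_le_sum hterm

theorem weight_mul_abs_partialBell_le {α r : ℝ} (hα : 1 ≤ α) (hr : 0 ≤ r) {a : ℕ → ℝ} {Q : ℝ⟦X⟧}
    (haQ : ∀ i, r ^ i / (i ! : ℝ) ^ α * |a i| ≤ coeff i Q) (n k : ℕ) :
    r ^ n / (n ! : ℝ) ^ α * |partialBell a n k| ≤ coeff n (Q ^ k) / (k ! : ℝ) ^ α := by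
  have hrpow (i : ℕ) : (i ! : ℝ) ^ α = (i ! : ℝ) ^ (α - 1) * i ! := by
    rw [← Real.rpow_add_one (by positivity), sub_add_cancel]
  have hcoeff (i : ℕ) :
      r ^ i / (i ! : ℝ) ^ (α - 1) * ‖coeff i (expGenSeries a)‖ ≤ coeff i Q := by
    rcases i with _ | i
    · simpa [constantCoeff_expGenSeries] using le_trans (by positivity) (haQ 0)
    · refine le_of_eq_of_le ?_ (haQ (i + 1))
      rw [coeff_succ_expGenSeries, hrpow, Real.norm_eq_abs, abs_div, Nat.abs_cast]
      ring
  have hpow := factorial_rpow_mul_norm_coeff_pow_le hr (sub_nonneg.2 hα)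
    (constantCoeff_expGenSeries a) hcoeff n k
  calc r ^ n / (n ! : ℝ) ^ α * |partialBell a n k|
      = (k ! : ℝ) ^ (α - 1) * (r ^ n / (n ! : ℝ) ^ (α - 1)) * ‖coeff n (expGenSeries a ^ k)‖ /
          (k ! : ℝ) ^ α := by
        rw [partialBell, abs_mul, abs_div, Nat.abs_cast, Nat.abs_cast, hrpow, hrpow,
          Real.norm_eq_abs]
        field_simp
    _ ≤ coeff n (Q ^ k) / (k ! : ℝ) ^ α := by gcongr

end Weights

section CoefficientSums

lemma coeff_pow_nonneg {P : ℝ⟦X⟧} (hP : ∀ i, 0 ≤ coeff i P) (n k : ℕ) : 0 ≤ coeff n (P ^ k) := by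
  rw [coeff_pow]
  exact sum_nonneg fun l _ => prod_nonneg fun i _ => hP _

lemma tsum_ofReal_coeff_mul {P Q : ℝ⟦X⟧} (hP : ∀ i, 0 ≤ coeff i P) (hQ : ∀ i, 0 ≤ coeff i Q) :
    ∑' n, ENNReal.ofReal (coeff n (P * Q)) =
      (∑' n, ENNReal.ofReal (coeff n P)) * ∑' n, ENNReal.ofReal (coeff n Q) := by
  simp_rw [← ENNReal.tsum_mul_right, ← ENNReal.tsum_mul_left]
  rw [← ENNReal.tsum_prod (f := fun i j => ENNReal.ofReal (coeff i P) * ENNReal.ofReal (coeff j Q)),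
    ← HasAntidiagonal.sigmaAntidiagonalEquivProd.tsum_eq, ENNReal.tsum_sigma']
  refine tsum_congr fun n => ?_
  rw [coeff_mul, ENNReal.ofReal_sum_of_nonneg fun p _ => mul_nonneg (hP _) (hQ _), tsum_fintype,
    ← sum_coe_sort]
  exact sum_congr rfl fun p _ => ENNReal.ofReal_mul (hP _)

lemma tsum_ofReal_coeff_pow {P : ℝ⟦X⟧} (hP : ∀ i, 0 ≤ coeff i P) (k : ℕ) :
    ∑' n, ENNReal.ofReal (coeff n (P ^ k)) = (∑' n, ENNReal.ofReal (coeff n P)) ^ k := by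
  induction k with
  | zero => rw [tsum_eq_single 0 fun n hn => by simp [coeff_one, hn]]; simp
  | succ k ih => rw [pow_succ, tsum_ofReal_coeff_mul (coeff_pow_nonneg hP · k) hP, ih, pow_succ]

end CoefficientSums

section Norm

/-- The supremum `sup_J |f⁽ˡ⁾|` entering the Gevrey norm; it has the junk value `0` when `f⁽ˡ⁾` is
unbounded on `J`. -/
def supDeriv (J : Set ℝ) (f : ℝ → ℝ) (l : ℕ) : ℝ :=
  ⨆ x : J, |deriv^[l] f x|

/-- The power series whose coefficients are the terms of the series defining `|f|_{α,L}`, so that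
`gevreyNorm1` is the sum of its coefficients. -/
def gevreySeries (α L : ℝ) (J : Set ℝ) (f : ℝ → ℝ) : ℝ⟦X⟧ :=
  .mk fun l => L ^ (α * (l : ℝ)) / (l ! : ℝ) ^ α * supDeriv J f l

variable {α L : ℝ} {I J : Set ℝ} {f g : ℝ → ℝ}

lemma gevreyNorm1_eq_tsum_coeff (α L : ℝ) (J : Set ℝ) (f : ℝ → ℝ) :
    gevreyNorm1 α L J f = ∑' l, ENNReal.ofReal (coeff l (gevreySeries α L J f)) := by
  simp only [gevreyNorm1, gevreySeries, supDeriv, coeff_mk]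

lemma supDeriv_nonneg (J : Set ℝ) (f : ℝ → ℝ) (l : ℕ) : 0 ≤ supDeriv J f l :=
  Real.iSup_nonneg fun _ => abs_nonneg _

lemma abs_iteratedDeriv_le_supDeriv {l : ℕ} (hf : BddAbove ((|deriv^[l] f ·|) '' J)) {x : ℝ}
    (hx : x ∈ J) : |iteratedDeriv l f x| ≤ supDeriv J f l := by
  rw [iteratedDeriv_eq_iterate]
  exact le_ciSup (f := fun y : J => |deriv^[l] f y|)
    (by rwa [Set.image_eq_range] at hf) ⟨x, hx⟩

lemma bddAbove_abs_iterate_deriv (hf : ContDiff ℝ ∞ f) (hJ : IsCompact J) (l : ℕ) :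
    BddAbove ((|deriv^[l] f ·|) '' J) :=
  hJ.bddAbove_image (hf.iterate_deriv l).continuous.abs.continuousOn

lemma coeff_gevreySeries (hL : 0 ≤ L) (l : ℕ) :
    coeff l (gevreySeries α L J f) = (L ^ α) ^ l / (l ! : ℝ) ^ α * supDeriv J f l := by
  rw [gevreySeries, coeff_mk, Real.rpow_mul_natCast hL]

lemma coeff_gevreySeries_nonneg (hL : 0 ≤ L) (l : ℕ) : 0 ≤ coeff l (gevreySeries α L J f) := by
  rw [coeff_gevreySeries hL]
  exact mul_nonneg (by positivity) (supDeriv_nonneg J f l)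

lemma weight_mul_abs_iteratedDeriv_comp_le (hα : 1 ≤ α) (hL : 0 ≤ L)
    (hf : ContDiff ℝ ∞ f) (hg : ContDiff ℝ ∞ g)
    (hfI : ∀ l, BddAbove ((|deriv^[l] f ·|) '' I)) (hgJ : ∀ l, BddAbove ((|deriv^[l] g ·|) '' J))
    (hmap : Set.MapsTo g J I) (n : ℕ) {x : ℝ} (hx : x ∈ J) :
    (L ^ α) ^ n / (n ! : ℝ) ^ α * |iteratedDeriv n (f ∘ g) x| ≤
      ∑ k ∈ range (n + 1),
        supDeriv I f k / (k ! : ℝ) ^ α * coeff n (gevreySeries α L J g ^ k) := by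
  set a : ℕ → ℝ := fun i => iteratedDeriv i g x
  have hbell := weight_mul_abs_partialBell_le hα (by positivity : 0 ≤ L ^ α) (a := a)
    (Q := gevreySeries α L J g) fun i => by
      rw [coeff_gevreySeries hL]
      gcongr
      exact abs_iteratedDeriv_le_supDeriv (hgJ i) hx
  have hn : (n : ℕ∞ω) ≤ (∞ : ℕ∞ω) := mod_cast le_top
  calc (L ^ α) ^ n / (n ! : ℝ) ^ α * |iteratedDeriv n (f ∘ g) x|
      ≤ (L ^ α) ^ n / (n ! : ℝ) ^ α *
          ∑ k ∈ range (n + 1), |iteratedDeriv k f (g x) * partialBell a n k| := by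
        rw [iteratedDeriv_comp_eq_sum_partialBell (hf.of_le hn) (hg.of_le hn)]
        gcongr
        exact abs_sum_le_sum_abs _ _
    _ = ∑ k ∈ range (n + 1), |iteratedDeriv k f (g x)| *
          ((L ^ α) ^ n / (n ! : ℝ) ^ α * |partialBell a n k|) := by
        rw [mul_sum]
        exact sum_congr rfl fun k _ => by rw [abs_mul]; ring
    _ ≤ ∑ k ∈ range (n + 1),
          supDeriv I f k * (coeff n (gevreySeries α L J g ^ k) / (k ! : ℝ) ^ α) := by
        gcongr with k
        · exact supDeriv_nonneg I f k
        · exact abs_iteratedDeriv_le_supDeriv (hfI k) (hmap hx)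
        · exact hbell n k
    _ = _ := sum_congr rfl fun k _ => by ring

lemma coeff_gevreySeries_comp_le (hα : 1 ≤ α) (hL : 0 ≤ L)
    (hf : ContDiff ℝ ∞ f) (hg : ContDiff ℝ ∞ g)
    (hfI : ∀ l, BddAbove ((|deriv^[l] f ·|) '' I)) (hgJ : ∀ l, BddAbove ((|deriv^[l] g ·|) '' J))
    (hmap : Set.MapsTo g J I) (n : ℕ) :
    coeff n (gevreySeries α L J (f ∘ g)) ≤
      ∑ k ∈ range (n + 1),
        supDeriv I f k / (k ! : ℝ) ^ α * coeff n (gevreySeries α L J g ^ k) := by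
  rw [coeff_gevreySeries hL, supDeriv, Real.mul_iSup_of_nonneg (by positivity)]
  refine Real.iSup_le (fun x => ?_) (sum_nonneg fun k _ => ?_)
  · rw [← iteratedDeriv_eq_iterate]
    exact weight_mul_abs_iteratedDeriv_comp_le hα hL hf hg hfI hgJ hmap n x.2
  · exact mul_nonneg (div_nonneg (supDeriv_nonneg I f k) (by positivity))
      (coeff_pow_nonneg (coeff_gevreySeries_nonneg hL) n k)

end Norm

end Gevrey

open Gevrey PowerSeries in
open scoped Nat ContDiff in
theorem gevrey_comp_general {α Λ L : ℝ} (hα : 1 ≤ α) (hΛ : 0 ≤ Λ) (hL : 0 ≤ L) {I J : Set ℝ}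
    {f g : ℝ → ℝ} (hf : ContDiff ℝ ∞ f) (hg : ContDiff ℝ ∞ g)
    (hfI : ∀ l, BddAbove ((|deriv^[l] f ·|) '' I)) (hgJ : ∀ l, BddAbove ((|deriv^[l] g ·|) '' J))
    (hmap : Set.MapsTo g J I) (hbound : gevreyNorm1 α L J g ≤ ENNReal.ofReal (Λ ^ α)) :
    gevreyNorm1 α L J (f ∘ g) ≤ gevreyNorm1 α Λ I f := by
  set c : ℕ → ℝ := fun k => supDeriv I f k / (k ! : ℝ) ^ α
  have hc (k : ℕ) : 0 ≤ c k := div_nonneg (supDeriv_nonneg I f k) (by positivity)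
  set P := gevreySeries α L J g
  have hP : ∀ i, 0 ≤ coeff i P := coeff_gevreySeries_nonneg hL
  rw [gevreyNorm1_eq_tsum_coeff] at hbound
  rw [gevreyNorm1_eq_tsum_coeff, gevreyNorm1_eq_tsum_coeff]
  calc ∑' n, ENNReal.ofReal (coeff n (gevreySeries α L J (f ∘ g)))
      ≤ ∑' n, ∑' k, ENNReal.ofReal (c k) * ENNReal.ofReal (coeff n (P ^ k)) := by
        refine ENNReal.tsum_le_tsum fun n => (ENNReal.ofReal_le_ofReal
          (coeff_gevreySeries_comp_le hα hL hf hg hfI hgJ hmap n)).trans ?_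
        rw [ENNReal.ofReal_sum_of_nonneg fun k _ => mul_nonneg (hc k) (coeff_pow_nonneg hP n k)]
        simp_rw [← ENNReal.ofReal_mul (hc _)]
        exact ENNReal.sum_le_tsum _
    _ = ∑' k, ENNReal.ofReal (c k) * (∑' n, ENNReal.ofReal (coeff n P)) ^ k := by
        rw [ENNReal.tsum_comm]
        simp_rw [ENNReal.tsum_mul_left, tsum_ofReal_coeff_pow hP]
    _ ≤ ∑' k, ENNReal.ofReal (c k) * ENNReal.ofReal (Λ ^ α) ^ k := by gcongr
    _ = ∑' k, ENNReal.ofReal (coeff k (gevreySeries α Λ I f)) := by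
        refine tsum_congr fun k => ?_
        rw [← ENNReal.ofReal_pow (by positivity), ← ENNReal.ofReal_mul (hc k),
          coeff_gevreySeries hΛ]
        congr 1
        ring

/-- Composition of Gevrey functions: if `f ∈ G^{α,Λ₁}(I)`, `g ∈ G^{α,L₁}(J)`, `g(J) ⊆ I`
and `|g|_{α,L₁} ≤ Λ₁^α`, then `f ∘ g ∈ G^{α,L₁}(J)` with `|f ∘ g|_{α,L₁} ≤ |f|_{α,Λ₁}`.
Here `I = [a,b]` and `J = [c,d]` are compact intervals of `ℝ`. -/
theorem gevrey_comp (α Λ₁ L₁ : ℝ) (hα : 1 ≤ α) (hΛ₁ : 0 < Λ₁) (hL₁ : 0 < L₁)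
    (a b c d : ℝ) (hab : a ≤ b) (hcd : c ≤ d) (f g : ℝ → ℝ)
    (hf : ContDiff ℝ (⊤ : ℕ∞) f) (hg : ContDiff ℝ (⊤ : ℕ∞) g)
    (hfI : gevreyNorm1 α Λ₁ (Set.Icc a b) f ≠ ⊤)
    (hmap : Set.MapsTo g (Set.Icc c d) (Set.Icc a b))
    (hbound : gevreyNorm1 α L₁ (Set.Icc c d) g ≤ ENNReal.ofReal (Λ₁ ^ α)) :
    gevreyNorm1 α L₁ (Set.Icc c d) (f ∘ g) ≤ gevreyNorm1 α Λ₁ (Set.Icc a b) f := by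
  exact gevrey_comp_general hα hΛ₁.le hL₁.le hf hg
    (Gevrey.bddAbove_abs_iterate_deriv hf isCompact_Icc)
    (Gevrey.bddAbove_abs_iterate_deriv hg isCompact_Icc) hmap hbound
end
end
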